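/- Let Y ⊆ ℂ^{n+1} be the common zero set of a (possibly empty) family of homogeneous polynomials each of which is invariant. Let m ≥ 0 and let f be a homogeneous polynomial of degree m whose restriction to Y is not identically zero. Then there exist an integer r with 0 ≤ r ≤ m, a finite simple graph K on {0, …, n} with c(K) ≥ n + 1 − r, and an invariant homogeneous polynomial g_0 of degree m − r whose restriction to Y is not identically zero, such that Bs(f) ∩ Y ⊆ Bs(f_K · g_0). -/

import Mathlib

open MvPolynomial

/-- `Bs h` is the common zero set in `ℂ^{n+1}` of all the `S_{n+1}`-translates of the
polynomial `h`, where `S_{n+1}` acts by permuting the variables. -/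
def Bs {n : ℕ} (h : MvPolynomial (Fin (n + 1)) ℂ) : Set (Fin (n + 1) → ℂ) :=
  {p | ∀ σ : Equiv.Perm (Fin (n + 1)), eval p (rename (⇑σ) h) = 0}

open scoped Classical in
/-- For a finite simple graph `K` on the vertex set `{0,…,n}`, `fK K` is the product
`∏_{{i,j} ∈ E(K)} (x_i − x_j)`, with one factor per edge, each edge ordered so that
`i < j` (a fixed choice of ordering of each edge). -/
noncomputable def fK {n : ℕ} (K : SimpleGraph (Fin (n + 1))) :
    MvPolynomial (Fin (n + 1)) ℂ :=
  ∏ p ∈ Finset.univ.filter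
      (fun p : Fin (n + 1) × Fin (n + 1) => K.Adj p.1 p.2 ∧ p.1 < p.2),
    (X p.1 - X p.2)

/-!
The idea: as long as `f` is not invariant on `Y`, some transposition `(i j)` changes its values
there, and `f` may be replaced by the divided difference `(f - (i j)·f) / (x_i - x_j)`, which has
degree one less and is still not identically zero on `Y`. The vanishing of `f` on `Bs(f) ∩ Y` is
inherited by the divided difference at all points whose coordinates differ along the edges of a
graph. This graph, which starts out empty, grows by the edge `{i, j}` and its own image under
`(i j)`. Once the edge `{i, j}` is there, adding the image merges no further components, so each
step costs at most one component. When the polynomial has become invariant on `Y`, summing its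
translates over the symmetric group makes it invariant and only multiplies its values on `Y` by
`(n + 1)!`.
-/

/-- `p` is a proper colouring of the graph `K`: the unbundled form of `K.Coloring R`. For a point
`p` of affine space this says that `p` lies off the zero set of `∏_{{i,j} ∈ E(K)} (x_i - x_j)`. -/
def IsProperColoring {ι R : Type*} (K : SimpleGraph ι) (p : ι → R) : Prop :=
  ∀ ⦃a b⦄, K.Adj a b → p a ≠ p b

/-- A set of points of affine space is permutation-stable if it is closed under permuting the
coordinates. -/
def IsPermStable {ι R : Type*} (S : Set (ι → R)) : Prop :=
  ∀ p ∈ S, ∀ σ : Equiv.Perm ι, p ∘ σ ∈ S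

lemma IsPermStable.inter {ι R : Type*} {S T : Set (ι → R)} (hS : IsPermStable S)
    (hT : IsPermStable T) : IsPermStable (S ∩ T) :=
  fun p hp σ => ⟨hS p hp.1 σ, hT p hp.2 σ⟩

/-- A polynomial is symmetric on `Y` if all its translates under permutations of the variables
restrict to the same function on `Y`. -/
def IsSymmetricOn {ι R : Type*} [CommSemiring R] (Y : Set (ι → R)) (h : MvPolynomial ι R) : Prop :=
  ∀ σ : Equiv.Perm ι, ∀ y ∈ Y, eval (y ∘ σ) h = eval y h

section ConnectedComponents

variable {V : Type*} [Finite V]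

lemma ncard_range_le_card_connectedComponent {α : Type*} {G : SimpleGraph V} {f : V → α}
    (hf : ∀ ⦃a b⦄, G.Adj a b → f a = f b) :
    (Set.range f).ncard ≤ Nat.card G.ConnectedComponent := by
  have eq_of_walk {a b : V} (w : G.Walk a b) : f a = f b := by
    induction w with
    | nil => rfl
    | cons hadj _ ih => exact (hf hadj).trans ih
  let F : G.ConnectedComponent → α :=
    SimpleGraph.ConnectedComponent.lift f fun _ _ w _ => eq_of_walk w
  have range_eq : Set.range F = Set.range f :=
    (Quot.mk_surjective (r := G.Reachable).range_comp F).symm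
  rw [← range_eq]
  exact Finite.card_range_le F

lemma card_le_card_connectedComponent_bot :
    Nat.card V ≤ Nat.card (⊥ : SimpleGraph V).ConnectedComponent := by
  simpa using ncard_range_le_card_connectedComponent (G := ⊥) (f := (id : V → V)) (by simp)

end ConnectedComponents

section SwapExtension

variable {ι : Type*} [DecidableEq ι] (K : SimpleGraph ι) (i j : ι)

/-- The union of a graph, its image under the transposition of `i` and `j`, and the edge `{i, j}`.
If a polynomial vanishes at all proper colourings of `K` in some permutation-stable set, its
divided difference in `x_i` and `x_j` vanishes at all proper colourings of this graph in it. -/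
def swapExtension : SimpleGraph ι :=
  K ⊔ K.comap (Equiv.swap i j) ⊔ SimpleGraph.edge i j

variable {K i j}

lemma IsProperColoring.of_swapExtension {R : Type*} {p : ι → R}
    (hp : IsProperColoring (swapExtension K i j) p) : IsProperColoring K p :=
  fun _ _ hab => hp (.inl (.inl hab))

lemma IsProperColoring.comp_swap_of_swapExtension {R : Type*} {p : ι → R}
    (hp : IsProperColoring (swapExtension K i j) p) :
    IsProperColoring K (p ∘ Equiv.swap i j) :=
  fun _ _ hab => hp (.inl (.inr (by simpa using hab)))

lemma IsProperColoring.ne_of_swapExtension {R : Type*} {p : ι → R}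
    (hp : IsProperColoring (swapExtension K i j) p) (hij : i ≠ j) : p i ≠ p j :=
  hp (.inr (by simp [SimpleGraph.edge_adj, hij]))

variable (K i j)

lemma card_connectedComponent_le_swapExtension_add_one [Finite ι] :
    Nat.card K.ConnectedComponent ≤
      Nat.card (swapExtension K i j).ConnectedComponent + 1 := by
  classical
  let merge (a : ι) : K.ConnectedComponent :=
    if K.connectedComponentMk a = K.connectedComponentMk i then K.connectedComponentMk j
    else K.connectedComponentMk a
  have merge_eq_of_adj {a b : ι} (hab : K.Adj a b) : merge a = merge b := by
    simp only [merge, SimpleGraph.ConnectedComponent.connectedComponentMk_eq_of_adj hab]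
  have merge_left_eq_right : merge i = merge j := by simp [merge]
  have merge_swap (a : ι) : merge (Equiv.swap i j a) = merge a := by
    rcases eq_or_ne a i with rfl | hai
    · rw [Equiv.swap_apply_left, merge_left_eq_right]
    rcases eq_or_ne a j with rfl | haj
    · rw [Equiv.swap_apply_right, merge_left_eq_right]
    rw [Equiv.swap_apply_of_ne_of_ne hai haj]
  have merge_eq_of_extension_adj ⦃a b : ι⦄ (hab : (swapExtension K i j).Adj a b) :
      merge a = merge b := by
    rcases hab with (hK | hswap) | hedge
    · exact merge_eq_of_adj hK
    · simpa only [merge_swap] using merge_eq_of_adj hswap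
    · obtain ⟨⟨rfl, rfl⟩ | ⟨rfl, rfl⟩, -⟩ := (SimpleGraph.edge_adj ..).1 hedge
      exacts [merge_left_eq_right, merge_left_eq_right.symm]
  have univ_subset : Set.univ ⊆ insert (K.connectedComponentMk i) (Set.range merge) := by
    rintro C -
    induction C using SimpleGraph.ConnectedComponent.ind with | _ a
    by_cases hai : K.connectedComponentMk a = K.connectedComponentMk i
    · exact .inl hai
    · exact .inr ⟨a, if_neg hai⟩
  calc Nat.card K.ConnectedComponent
      = (Set.univ : Set K.ConnectedComponent).ncard := (Set.ncard_univ _).symm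
    _ ≤ (insert (K.connectedComponentMk i) (Set.range merge)).ncard :=
        Set.ncard_le_ncard univ_subset
    _ ≤ (Set.range merge).ncard + 1 := Set.ncard_insert_le _ _
    _ ≤ Nat.card (swapExtension K i j).ConnectedComponent + 1 :=
        Nat.add_le_add_right
          (ncard_range_le_card_connectedComponent merge_eq_of_extension_adj) 1

end SwapExtension

section DividedDifference

variable {σ R : Type*} [CommRing R]

lemma rename_sub_rename_mem {τ : Type*} {I : Ideal (MvPolynomial τ R)} {u v : σ → τ}
    (huv : ∀ k, X (u k) - X (v k) ∈ I) (h : MvPolynomial σ R) :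
    rename u h - rename v h ∈ I := by
  have quotient_eq :
      (Ideal.Quotient.mkₐ R I).comp (rename u) = (Ideal.Quotient.mkₐ R I).comp (rename v) := by
    refine algHom_ext fun k => ?_
    simpa [Ideal.Quotient.eq] using huv k
  exact Ideal.Quotient.eq.1 (DFunLike.congr_fun quotient_eq h)

lemma X_sub_X_dvd_sub_rename_swap [DecidableEq σ] (i j : σ) (h : MvPolynomial σ R) :
    X i - X j ∣ h - rename (Equiv.swap i j) h := by
  rw [← Ideal.mem_span_singleton]
  have hX (k : σ) :
      (X (id k) - X (Equiv.swap i j k) : MvPolynomial σ R) ∈ Ideal.span {X i - X j} := by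
    rw [Ideal.mem_span_singleton]
    rcases eq_or_ne k i with rfl | hki
    · simp
    rcases eq_or_ne k j with rfl | hkj
    · simpa using (dvd_sub_comm (a := (X i - X k : MvPolynomial σ R))).1 dvd_rfl
    simp [Equiv.swap_apply_of_ne_of_ne hki hkj]
  simpa using rename_sub_rename_mem hX h

attribute [local instance] MvPolynomial.gradedAlgebra in
lemma homogeneousComponent_add_mul {a : MvPolynomial σ R} {k : ℕ} (ha : a.IsHomogeneous k)
    (m : ℕ) (b : MvPolynomial σ R) :
    homogeneousComponent (k + m) (a * b) = a * homogeneousComponent m b := by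
  rw [← decomposition.decompose'_apply, ← decomposition.decompose'_apply]
  have hdecomp := DirectSum.coe_decompose_mul_of_left_mem_of_le (homogeneousSubmodule σ R)
    (b := b) ha (Nat.le_add_right k m)
  rwa [Nat.add_sub_cancel_left] at hdecomp

lemma exists_isHomogeneous_eq_mul_of_dvd {a c : MvPolynomial σ R} {k m : ℕ}
    (ha : a.IsHomogeneous k) (hc : c.IsHomogeneous (k + m)) (hac : a ∣ c) :
    ∃ b : MvPolynomial σ R, b.IsHomogeneous m ∧ c = a * b := by
  obtain ⟨b, rfl⟩ := hac
  refine ⟨homogeneousComponent m b, homogeneousComponent_isHomogeneous m b, ?_⟩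
  rw [← homogeneousComponent_add_mul ha, homogeneousComponent_eq_self hc]

lemma exists_isHomogeneous_sub_rename_swap_eq_mul [DecidableEq σ] (i j : σ) {m : ℕ}
    {h : MvPolynomial σ R} (hh : h.IsHomogeneous (m + 1)) :
    ∃ q : MvPolynomial σ R, q.IsHomogeneous m ∧
      h - rename (Equiv.swap i j) h = (X i - X j) * q := by
  refine exists_isHomogeneous_eq_mul_of_dvd ((isHomogeneous_X R i).sub (isHomogeneous_X R j))
    ?_ (X_sub_X_dvd_sub_rename_swap i j h)
  rw [Nat.add_comm]
  exact hh.sub hh.rename_isHomogeneous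

end DividedDifference

section SymmetricOn

variable {ι R : Type*} [CommSemiring R] {Y : Set (ι → R)} {h : MvPolynomial ι R}

lemma isSymmetricOn_of_isHomogeneous_zero (hh : h.IsHomogeneous 0) : IsSymmetricOn Y h := by
  rw [totalDegree_eq_zero_iff_eq_C.1 ((totalDegree_zero_iff_isHomogeneous ι).2 hh)]
  intro σ y _
  simp only [eval_C]

lemma isSymmetricOn_of_swap [Finite ι] [DecidableEq ι] (hY : IsPermStable Y)
    (hswap : ∀ i j, ∀ y ∈ Y, eval (y ∘ Equiv.swap i j) h = eval y h) : IsSymmetricOn Y h := by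
  intro σ
  induction σ using Equiv.Perm.swap_induction_on with
  | one => simp
  | swap_mul τ i j _ ih =>
    intro y hy
    rw [Equiv.Perm.coe_mul, ← Function.comp_assoc, ih _ (hY y hy _), hswap i j y hy]

variable [Fintype ι] [DecidableEq ι]

/-- The sum of all translates of a polynomial under permutations of the variables: the Reynolds
operator of the symmetric group, without the division by the order of the group. -/
noncomputable def permSum (h : MvPolynomial ι R) : MvPolynomial ι R :=
  ∑ σ : Equiv.Perm ι, rename σ h

lemma permSum_isSymmetric (h : MvPolynomial ι R) : (permSum h).IsSymmetric := by
  intro σ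
  simp only [permSum, map_sum, rename_rename]
  exact Fintype.sum_equiv (Equiv.mulLeft σ) _ _ fun _ => rfl

lemma permSum_isHomogeneous {m : ℕ} (hh : h.IsHomogeneous m) : (permSum h).IsHomogeneous m :=
  IsHomogeneous.sum _ _ _ fun _ _ => hh.rename_isHomogeneous

lemma IsSymmetricOn.eval_permSum (hh : IsSymmetricOn Y h) {y : ι → R} (hy : y ∈ Y) :
    eval y (permSum h) = (Nat.card ι).factorial * eval y h := by
  simp only [permSum, map_sum, eval_rename, hh _ y hy, Finset.sum_const, Finset.card_univ,
    Fintype.card_perm, nsmul_eq_mul, Nat.card_eq_fintype_card]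

end SymmetricOn

section Descent

variable {ι R : Type*} [CommRing R] [NoZeroDivisors R] {W Y : Set (ι → R)}

lemma exists_dividedDifference_of_not_isSymmetricOn [Finite ι] [DecidableEq ι]
    (hW : IsPermStable W) (hY : IsPermStable Y)
    {m : ℕ} {h : MvPolynomial ι R} {K : SimpleGraph ι} (hh : h.IsHomogeneous (m + 1))
    (hsymm : ¬ IsSymmetricOn Y h) (hvan : ∀ p ∈ W, IsProperColoring K p → eval p h = 0) :
    ∃ (i j : ι) (q : MvPolynomial ι R), q.IsHomogeneous m ∧ (∃ y ∈ Y, eval y q ≠ 0) ∧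
      ∀ p ∈ W, IsProperColoring (swapExtension K i j) p → eval p q = 0 := by
  obtain ⟨i, j, y, hy, hne⟩ : ∃ i j, ∃ y ∈ Y, eval (y ∘ Equiv.swap i j) h ≠ eval y h := by
    contrapose! hsymm
    exact isSymmetricOn_of_swap hY hsymm
  have hij : i ≠ j := by
    rintro rfl
    simp at hne
  obtain ⟨q, hq, hdiff⟩ := exists_isHomogeneous_sub_rename_swap_eq_mul i j hh
  have eval_diff (p : ι → R) :
      eval p h - eval (p ∘ Equiv.swap i j) h = (p i - p j) * eval p q := by
    simpa [eval_rename] using congrArg (eval p) hdiff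
  refine ⟨i, j, q, hq, ⟨y, hy, fun hzero => ?_⟩, fun p hp hcol => ?_⟩
  · have := eval_diff y
    rw [hzero, mul_zero, sub_eq_zero] at this
    exact hne this.symm
  · have hprod : (p i - p j) * eval p q = 0 := by
      rw [← eval_diff, hvan p hp hcol.of_swapExtension,
        hvan _ (hW p hp _) hcol.comp_swap_of_swapExtension, sub_zero]
    exact (mul_eq_zero.1 hprod).resolve_left (sub_ne_zero.2 (hcol.ne_of_swapExtension hij))

lemma exists_isSymmetricOn_of_vanishing [Finite ι] (hW : IsPermStable W) (hY : IsPermStable Y)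
    {m : ℕ} {h : MvPolynomial ι R} {K : SimpleGraph ι} (hh : h.IsHomogeneous m)
    (hne : ∃ y ∈ Y, eval y h ≠ 0) (hvan : ∀ p ∈ W, IsProperColoring K p → eval p h = 0) :
    ∃ r ≤ m, ∃ (K' : SimpleGraph ι) (h' : MvPolynomial ι R),
      Nat.card K.ConnectedComponent ≤ Nat.card K'.ConnectedComponent + r ∧
      IsSymmetricOn Y h' ∧ h'.IsHomogeneous (m - r) ∧ (∃ y ∈ Y, eval y h' ≠ 0) ∧
      ∀ p ∈ W, IsProperColoring K' p → eval p h' = 0 := by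
  classical
  induction m generalizing h K with
  | zero => exact ⟨0, le_rfl, K, h, le_rfl, isSymmetricOn_of_isHomogeneous_zero hh, hh, hne, hvan⟩
  | succ m ih =>
    by_cases hsymm : IsSymmetricOn Y h
    · exact ⟨0, Nat.zero_le _, K, h, le_rfl, hsymm, hh, hne, hvan⟩
    obtain ⟨i, j, q, hq, hq_ne, hq_van⟩ :=
      exists_dividedDifference_of_not_isSymmetricOn hW hY hh hsymm hvan
    obtain ⟨r, hr, K', h', hcard, hsymm', hh', hne', hvan'⟩ := ih hq hq_ne hq_van
    have hstep := card_connectedComponent_le_swapExtension_add_one K i j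
    refine ⟨r + 1, by lia, K', h', by lia, hsymm', ?_, hne', hvan'⟩
    rwa [Nat.add_sub_add_right]

end Descent

lemma isPermStable_setOf_eval_rename_eq_zero {ι R : Type*} [CommSemiring R]
    (h : MvPolynomial ι R) :
    IsPermStable {p : ι → R | ∀ σ : Equiv.Perm ι, eval p (rename σ h) = 0} := by
  intro p hp σ τ
  simpa only [eval_rename, Equiv.Perm.coe_mul, Function.comp_assoc] using hp (σ * τ)

lemma isPermStable_zeroLocus {ι R : Type*} [CommSemiring R] {F : Set (MvPolynomial ι R)}
    (hF : ∀ f ∈ F, f.IsSymmetric) : IsPermStable {p : ι → R | ∀ f ∈ F, eval p f = 0} := by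
  intro p hp σ f hf
  rw [← eval_rename, hF f hf σ]
  exact hp f hf

theorem stmt_3_general {ι R : Type*} [Finite ι] [CommRing R] [NoZeroDivisors R]
    (hchar : ((Nat.card ι).factorial : R) ≠ 0) {Y : Set (ι → R)} (hY : IsPermStable Y)
    {m : ℕ} {f : MvPolynomial ι R} (hf : f.IsHomogeneous m) (hf0 : ∃ y ∈ Y, eval y f ≠ 0) :
    ∃ r ≤ m, ∃ (K : SimpleGraph ι) (g₀ : MvPolynomial ι R),
      Nat.card ι - r ≤ Nat.card K.ConnectedComponent ∧
      g₀.IsSymmetric ∧ g₀.IsHomogeneous (m - r) ∧ (∃ y ∈ Y, eval y g₀ ≠ 0) ∧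
      ∀ p ∈ Y, (∀ σ : Equiv.Perm ι, eval p (rename σ f) = 0) →
        ∀ σ : Equiv.Perm ι, IsProperColoring K (p ∘ σ) → eval p g₀ = 0 := by
  classical
  cases nonempty_fintype ι
  have hW := (isPermStable_setOf_eval_rename_eq_zero f).inter hY
  obtain ⟨r, hr, K, h, hcard, hsymm, hh, ⟨y, hy, hyh⟩, hvan⟩ :=
    exists_isSymmetricOn_of_vanishing (K := ⊥) hW hY hf hf0
      (fun p hp _ => by simpa using hp.1 1)
  refine ⟨r, hr, K, permSum h, ?_, permSum_isSymmetric h, permSum_isHomogeneous hh,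
    ⟨y, hy, ?_⟩, fun p hpY hpf σ hcol => ?_⟩
  · exact Nat.sub_le_of_le_add (card_le_card_connectedComponent_bot.trans hcard)
  · rw [hsymm.eval_permSum hy]
    exact mul_ne_zero hchar hyh
  · rw [hsymm.eval_permSum hpY, ← hsymm σ p hpY, hvan _ (hW p ⟨hpf, hpY⟩ σ) hcol, mul_zero]

section BaseLocus

variable {n : ℕ} {K : SimpleGraph (Fin (n + 1))}

lemma IsProperColoring.of_eval_fK_ne_zero {p : Fin (n + 1) → ℂ} (hp : eval p (fK K) ≠ 0) :
    IsProperColoring K p := by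
  classical
  have factor_ne_zero {a b : Fin (n + 1)} (hab : K.Adj a b) (hlt : a < b) : p a - p b ≠ 0 := by
    rw [fK, map_prod, Finset.prod_ne_zero_iff] at hp
    simpa using hp (a, b) (by simp [hab, hlt])
  intro a b hab
  rcases hab.ne.lt_or_gt with hlt | hgt
  · exact sub_ne_zero.1 (factor_ne_zero hab hlt)
  · exact (sub_ne_zero.1 (factor_ne_zero hab.symm hgt)).symm

lemma mem_Bs_fK_mul {g : MvPolynomial (Fin (n + 1)) ℂ} (hg : g.IsSymmetric)
    {p : Fin (n + 1) → ℂ}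
    (hp : ∀ σ : Equiv.Perm (Fin (n + 1)), IsProperColoring K (p ∘ σ) → eval p g = 0) :
    p ∈ Bs (fK K * g) := by
  intro σ
  rw [map_mul, map_mul, hg, eval_rename, mul_eq_zero, or_iff_not_imp_left]
  exact fun hne => hp σ (.of_eval_fK_ne_zero hne)

end BaseLocus

/-- Corollary 4.7: given an intersection `Y` of invariant hypersurfaces and a
homogeneous polynomial `f` of degree `m` not vanishing identically on `Y`, there exist
`0 ≤ r ≤ m`, a graph `K` on `{0,…,n}` with `c(K) ≥ n + 1 − r`, and an invariant
homogeneous polynomial `g₀` of degree `m − r` not vanishing identically on `Y` such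
that `Bs(f) ∩ Y ⊆ Bs(f_K · g₀)`. -/
theorem stmt_3 (n : ℕ) (hn : 1 ≤ n)
    (F : Set (MvPolynomial (Fin (n + 1)) ℂ))
    (hF : ∀ f ∈ F, (∃ k : ℕ, f.IsHomogeneous k) ∧
      ∀ σ : Equiv.Perm (Fin (n + 1)), rename (⇑σ) f = f)
    (Y : Set (Fin (n + 1) → ℂ)) (hY : Y = {p | ∀ f ∈ F, eval p f = 0})
    (m : ℕ) (f : MvPolynomial (Fin (n + 1)) ℂ) (hf : f.IsHomogeneous m)
    (hf0 : ∃ y ∈ Y, eval y f ≠ 0) :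
    ∃ r : ℕ, r ≤ m ∧
      ∃ (K : SimpleGraph (Fin (n + 1))) (g₀ : MvPolynomial (Fin (n + 1)) ℂ),
        n + 1 - r ≤ Nat.card K.ConnectedComponent ∧
        (∀ σ : Equiv.Perm (Fin (n + 1)), rename (⇑σ) g₀ = g₀) ∧
        g₀.IsHomogeneous (m - r) ∧
        (∃ y ∈ Y, eval y g₀ ≠ 0) ∧
        Bs f ∩ Y ⊆ Bs (fK K * g₀) := by
  subst hY
  obtain ⟨r, hr, K, g₀, hcard, hsymm, hhom, hne, hvan⟩ := stmt_3_general
    (Nat.cast_ne_zero.2 (Nat.factorial_ne_zero _))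
    (isPermStable_zeroLocus fun g hg => (hF g hg).2) hf hf0
  exact ⟨r, hr, K, g₀, by simpa using hcard, hsymm, hhom, hne,
    fun p hp => mem_Bs_fK_mul hsymm (hvan p hp.2 hp.1)⟩
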